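/- For every N ∈ ℕ, the map (f, g) ↦ sup_{|x| ≤ N} ‖f(x) − g(x)‖_0 from (𝒞_0 × 𝒞_0, 𝒞 ⊗ 𝒞) to [0,∞] is measurable. Consequently, the map d_0^{lu}: (𝒞_0 × 𝒞_0, 𝒞 ⊗ 𝒞) → ℝ, d_0^{lu}(f,g) = Σ_{N=1}^∞ 2^{−N} a_N/(1+a_N) with a_N = sup_{|x|≤N} ‖f(x)−g(x)‖_0, is measurable. -/

import Mathlib

open MeasureTheory Filter Set Topology
open scoped ENNReal

noncomputable section

/-- The time interval `[0, T]` as a type. -/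
abbrev Icc0 (T : ℝ) : Type := ↥(Set.Icc (0 : ℝ) T)

/-- A function on `[0, T]` is càdlàg if it is right-continuous and has left limits. -/
def IsCadlag {E : Type*} [TopologicalSpace E] {T : ℝ} (f : Icc0 T → E) : Prop :=
  (∀ t, Tendsto f (nhdsWithin t (Set.Ioi t)) (nhds (f t))) ∧
    (∀ t, ∃ L, Tendsto f (nhdsWithin t (Set.Iio t)) (nhds L))

/-- `𝒟₀`: the space of càdlàg functions from `[0, T]` to `ℝ^d`. -/
def D0 (T : ℝ) (d : ℕ) : Type :=
  {f : Icc0 T → EuclideanSpace ℝ (Fin d) // IsCadlag f}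

/-- The uniform distance `‖x − y‖₀` on `𝒟₀`. -/
noncomputable def unifDist {T : ℝ} {d : ℕ} (f g : D0 T d) : ℝ :=
  ⨆ t : Icc0 T, dist (f.1 t) (g.1 t)

/-- `𝒟`: the σ-algebra on `𝒟₀` generated by the evaluation maps. -/
def Dsigma (T : ℝ) (d : ℕ) : MeasurableSpace (D0 T d) :=
  ⨆ t : Icc0 T, MeasurableSpace.comap (fun f => f.1 t) inferInstance

/-- Continuity of a map `ℝ^d → (𝒟₀, ‖·‖₀)`. -/
def ContinuousInD0 {T : ℝ} {d : ℕ} (F : EuclideanSpace ℝ (Fin d) → D0 T d) : Prop :=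
  ∀ x, ∀ ε > (0 : ℝ), ∃ δ > (0 : ℝ), ∀ y, dist x y < δ → unifDist (F x) (F y) < ε

/-- `𝒞₀ = C(ℝ^d; 𝒟₀)`. -/
def C0 (T : ℝ) (d : ℕ) : Type :=
  {F : EuclideanSpace ℝ (Fin d) → D0 T d // ContinuousInD0 F}

/-- `𝒞`: the σ-algebra on `𝒞₀` generated by the projections `π_x`. -/
def Csigma (T : ℝ) (d : ℕ) : MeasurableSpace (C0 T d) :=
  ⨆ x : EuclideanSpace ℝ (Fin d), MeasurableSpace.comap (fun F => F.1 x) (Dsigma T d)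

/-- `sup_{|x| ≤ N} ‖F(x) − G(x)‖₀` (real-valued). -/
noncomputable def supBall {T : ℝ} {d : ℕ} (N : ℝ) (F G : C0 T d) : ℝ :=
  ⨆ x : {x : EuclideanSpace ℝ (Fin d) // ‖x‖ ≤ N}, unifDist (F.1 x.1) (G.1 x.1)

/-- The metric `d₀ˡᵘ` on `𝒞₀`. -/
noncomputable def d0lu {T : ℝ} {d : ℕ} (F G : C0 T d) : ℝ :=
  ∑' N : ℕ, (1 / 2 : ℝ) ^ (N + 1) *
    (supBall ((N + 1 : ℕ) : ℝ) F G / (1 + supBall ((N + 1 : ℕ) : ℝ) F G))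

/-!
Both suprema can be restricted to countable sets. For the times this follows from right-continuity:
a countable dense set of times, together with the countably many times that are isolated from the
right (in `[0, T]` only the endpoint `T`), suffices. For the space points it suffices that
`x ↦ ‖f(x) - g(x)‖₀` is lower semicontinuous, being a supremum of the continuous functions
`x ↦ |f(x)(t) - g(x)(t)|`. The evaluations `f ↦ f(x)(t)` are `𝒞`-measurable, so what is left is a
countable supremum of `𝒞 ⊗ 𝒞`-measurable functions.
-/

section GeneralLemmas

variable {Ω α β E : Type*}

theorem isBounded_range_of_forall_exists_mem_nhds [TopologicalSpace α] [CompactSpace α]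
    [Bornology E] {f : α → E} (h : ∀ a, ∃ u ∈ 𝓝 a, Bornology.IsBounded (f '' u)) :
    Bornology.IsBounded (range f) := by
  choose u hu hbdd using h
  obtain ⟨s, hs⟩ := CompactSpace.elim_nhds_subcover u hu
  rw [← image_univ, ← top_eq_univ, ← hs, image_iUnion₂]
  exact (Bornology.isBounded_biUnion_finset s).2 fun a _ => hbdd a

theorem isBounded_range_of_tendsto_nhdsLT_of_tendsto_nhdsGT [TopologicalSpace α] [CompactSpace α]
    [LinearOrder α] [PseudoMetricSpace E] {f : α → E}
    (hleft : ∀ a, ∃ l, Tendsto f (𝓝[<] a) (𝓝 l))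
    (hright : ∀ a, ∃ l, Tendsto f (𝓝[>] a) (𝓝 l)) :
    Bornology.IsBounded (range f) := by
  refine isBounded_range_of_forall_exists_mem_nhds fun a => ?_
  obtain ⟨l, hl⟩ := hleft a
  obtain ⟨r, hr⟩ := hright a
  obtain ⟨u, hu, hu_bdd⟩ := Metric.exists_isBounded_image_of_tendsto hl
  obtain ⟨v, hv, hv_bdd⟩ := Metric.exists_isBounded_image_of_tendsto hr
  refine ⟨insert a (u ∪ v), ?_, ?_⟩
  · rw [insert_mem_nhds_iff, ← nhdsLT_sup_nhdsGT]
    exact union_mem_sup hu hv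
  · rw [image_insert_eq, image_union]
    exact (hu_bdd.union hv_bdd).insert (f a)

theorem exists_countable_forall_frequently_nhdsGT (α : Type*) [TopologicalSpace α] [LinearOrder α]
    [OrderTopology α] [SecondCountableTopology α] :
    ∃ s : Set α, s.Countable ∧ ∀ a ∉ s, ∃ᶠ b in 𝓝[>] a, b ∈ s := by
  obtain ⟨s, hs, hdense⟩ := TopologicalSpace.exists_countable_dense α
  refine ⟨s ∪ {a | 𝓝[>] a = ⊥}, hs.union countable_setOfPred_isolated_right, fun a ha => ?_⟩
  have hmem : a ∈ closure (Ioi a) :=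
    mem_closure_iff_nhdsWithin_neBot.2 ⟨fun hbot => ha (Or.inr hbot)⟩
  have hmem_inter : a ∈ closure (Ioi a ∩ s) :=
    closure_minimal (hdense.open_subset_closure_inter isOpen_Ioi) isClosed_closure hmem
  exact frequently_nhdsWithin_iff.2
    ((mem_closure_iff_frequently.1 hmem_inter).mono fun b hb => ⟨Or.inl hb.2, hb.1⟩)

theorem le_biSup_of_tendsto_of_frequently_mem [CompleteLattice β] [TopologicalSpace β]
    [ClosedIicTopology β] {l : Filter α} {g : α → β} {s : Set α} {c : β}
    (hg : Tendsto g l (𝓝 c)) (hs : ∃ᶠ b in l, b ∈ s) : c ≤ ⨆ b ∈ s, g b :=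
  le_of_tendsto_of_frequently hg (hs.mono fun _ hb => le_biSup g hb)

theorem measurable_iSup_of_tendsto_nhdsGT [TopologicalSpace α] [LinearOrder α] [OrderTopology α]
    [SecondCountableTopology α] [MeasurableSpace Ω] [CompleteLinearOrder β] [TopologicalSpace β]
    [OrderTopology β] [SecondCountableTopology β] [MeasurableSpace β] [BorelSpace β]
    {f : α → Ω → β} (hf : ∀ a, Measurable (f a))
    (hright : ∀ ω a, Tendsto (f · ω) (𝓝[>] a) (𝓝 (f a ω))) :
    Measurable fun ω => ⨆ a, f a ω := by
  obtain ⟨s, hs, hfreq⟩ := exists_countable_forall_frequently_nhdsGT α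
  have hle (ω : Ω) (a : α) : f a ω ≤ ⨆ b ∈ s, f b ω := by
    by_cases ha : a ∈ s
    · exact le_biSup (f · ω) ha
    · exact le_biSup_of_tendsto_of_frequently_mem (hright ω a) (hfreq a ha)
  have heq (ω : Ω) : ⨆ a, f a ω = ⨆ a ∈ s, f a ω :=
    le_antisymm (iSup_le (hle ω)) (iSup₂_le_iSup _ _)
  simpa only [heq] using Measurable.biSup s hs fun a _ => hf a

end GeneralLemmas

theorem IsCadlag.isBounded_range {E : Type*} [PseudoMetricSpace E] {T : ℝ} {f : Icc0 T → E}
    (hf : IsCadlag f) : Bornology.IsBounded (range f) :=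
  isBounded_range_of_tendsto_nhdsLT_of_tendsto_nhdsGT hf.2 fun t => ⟨f t, hf.1 t⟩

section Measurability

variable {T : ℝ} {d : ℕ}

theorem D0.bddAbove_range_dist (f g : D0 T d) :
    BddAbove (range fun t => dist (f.1 t) (g.1 t)) := by
  obtain ⟨C, hC⟩ := Metric.isBounded_iff.1 (f.2.isBounded_range.union g.2.isBounded_range)
  exact ⟨C, forall_mem_range.2 fun t =>
    hC (Or.inl (mem_range_self t)) (Or.inr (mem_range_self t))⟩

theorem dist_le_unifDist (f g : D0 T d) (t : Icc0 T) : dist (f.1 t) (g.1 t) ≤ unifDist f g :=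
  le_ciSup (D0.bddAbove_range_dist f g) t

theorem unifDist_nonneg (f g : D0 T d) : 0 ≤ unifDist f g :=
  Real.iSup_nonneg fun _ => dist_nonneg

theorem ofReal_unifDist (f g : D0 T d) :
    ENNReal.ofReal (unifDist f g) = ⨆ t, edist (f.1 t) (g.1 t) := by
  have hle : ⨆ t, edist (f.1 t) (g.1 t) ≤ ENNReal.ofReal (unifDist f g) := iSup_le fun t => by
    rw [edist_dist]
    exact ENNReal.ofReal_le_ofReal (dist_le_unifDist f g t)
  have htoReal : unifDist f g = (⨆ t, edist (f.1 t) (g.1 t)).toReal := by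
    simp only [unifDist, dist_edist, ENNReal.toReal_iSup fun t => edist_ne_top (f.1 t) (g.1 t)]
  rw [htoReal, ENNReal.ofReal_toReal (ne_top_of_le_ne_top ENNReal.ofReal_ne_top hle)]

theorem C0.continuous_eval (F : C0 T d) (t : Icc0 T) : Continuous fun x => (F.1 x).1 t := by
  refine Metric.continuous_iff'.2 fun x ε hε => ?_
  obtain ⟨δ, hδ, hF⟩ := F.2 x ε hε
  filter_upwards [Metric.ball_mem_nhds x hδ] with y hy
  rw [dist_comm]
  exact (dist_le_unifDist _ _ t).trans_lt (hF y (Metric.mem_ball'.1 hy))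

theorem supBall_eq_toReal_iSup (r : ℝ) (F G : C0 T d) :
    supBall r F G = (⨆ x : {x : EuclideanSpace ℝ (Fin d) // ‖x‖ ≤ r},
      ENNReal.ofReal (unifDist (F.1 x) (G.1 x))).toReal := by
  simp only [supBall, ENNReal.toReal_iSup fun _ => ENNReal.ofReal_ne_top,
    ENNReal.toReal_ofReal (unifDist_nonneg _ _)]

instance : MeasurableSpace (D0 T d) := Dsigma T d

instance : MeasurableSpace (C0 T d) := Csigma T d

theorem D0.measurable_eval (t : Icc0 T) : Measurable fun f : D0 T d => f.1 t :=
  Measurable.of_comap_le (le_iSup_of_le t le_rfl)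

theorem C0.measurable_proj (x : EuclideanSpace ℝ (Fin d)) :
    Measurable fun F : C0 T d => F.1 x :=
  Measurable.of_comap_le (le_iSup_of_le x le_rfl)

theorem C0.measurable_edist_eval (x : EuclideanSpace ℝ (Fin d)) (t : Icc0 T) :
    Measurable fun p : C0 T d × C0 T d => edist ((p.1.1 x).1 t) ((p.2.1 x).1 t) :=
  have heval : Measurable fun F : C0 T d => (F.1 x).1 t :=
    (D0.measurable_eval t).comp (C0.measurable_proj x)
  (heval.comp measurable_fst).edist (heval.comp measurable_snd)

theorem C0.measurable_ofReal_unifDist (x : EuclideanSpace ℝ (Fin d)) :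
    Measurable fun p : C0 T d × C0 T d => ENNReal.ofReal (unifDist (p.1.1 x) (p.2.1 x)) := by
  simp only [ofReal_unifDist]
  exact measurable_iSup_of_tendsto_nhdsGT (C0.measurable_edist_eval x) fun p t =>
    ((p.1.1 x).2.1 t).edist ((p.2.1 x).2.1 t)

theorem C0.lowerSemicontinuous_ofReal_unifDist (F G : C0 T d) :
    LowerSemicontinuous fun x => ENNReal.ofReal (unifDist (F.1 x) (G.1 x)) := by
  simp only [ofReal_unifDist]
  exact lowerSemicontinuous_iSup fun t =>
    ((F.continuous_eval t).edist (G.continuous_eval t)).lowerSemicontinuous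

theorem C0.measurable_iSup_ofReal_unifDist (A : Set (EuclideanSpace ℝ (Fin d))) :
    Measurable fun p : C0 T d × C0 T d =>
      ⨆ x : A, ENNReal.ofReal (unifDist (p.1.1 x) (p.2.1 x)) := by
  have hlsc (p : C0 T d × C0 T d) :
      LowerSemicontinuous fun x : A => ENNReal.ofReal (unifDist (p.1.1 x) (p.2.1 x)) :=
    (C0.lowerSemicontinuous_ofReal_unifDist p.1 p.2).comp continuous_subtype_val
  convert measurable_iSup_of_lowerSemicontinuous
    (fun x : A => C0.measurable_ofReal_unifDist x.1) hlsc using 1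
  simp only [funext_iff, iSup_apply, implies_true]

theorem measurable_supBall (r : ℝ) :
    Measurable fun p : C0 T d × C0 T d => supBall r p.1 p.2 := by
  simp only [supBall_eq_toReal_iSup]
  exact (C0.measurable_iSup_ofReal_unifDist {x | ‖x‖ ≤ r}).ennreal_toReal

end Measurability

/-- **Lemma (measurability of the ball suprema and of `d₀ˡᵘ` w.r.t. `𝒞 ⊗ 𝒞`).**
For every `N`, the map `(f,g) ↦ sup_{|x|≤N} ‖f(x) − g(x)‖₀ ∈ [0,∞]` is
`𝒞 ⊗ 𝒞`-measurable; consequently `d₀ˡᵘ : 𝒞₀ × 𝒞₀ → ℝ` is `𝒞 ⊗ 𝒞`-measurable. -/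
theorem d0lu_measurable (T : ℝ) (d : ℕ) :
    (∀ N : ℕ,
      @Measurable (C0 T d × C0 T d) ℝ≥0∞ ((Csigma T d).prod (Csigma T d)) inferInstance
        (fun p => ⨆ x : {x : EuclideanSpace ℝ (Fin d) // ‖x‖ ≤ (N : ℝ)},
          ENNReal.ofReal (unifDist (p.1.1 x.1) (p.2.1 x.1)))) ∧
    @Measurable (C0 T d × C0 T d) ℝ ((Csigma T d).prod (Csigma T d)) inferInstance
      (fun p => d0lu p.1 p.2) := by
  refine ⟨fun N => C0.measurable_iSup_ofReal_unifDist {x | ‖x‖ ≤ N}, Measurable.tsum fun N => ?_⟩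
  have hsup : Measurable fun p : C0 T d × C0 T d => supBall ((N + 1 : ℕ) : ℝ) p.1 p.2 :=
    measurable_supBall _
  exact (hsup.div (hsup.const_add 1)).const_mul _

end
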